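/- arXiv:math/0303009 — 2 statements merged into one kernel-verified Lean document; each statement's English description precedes it below -/
import Mathlib

section
/- For real numbers a and b, the Minkowski sum of the left monad of a and the right monad of b equals the full monad of a + b; that is, {a − x : x a positive infinitesimal hyperreal} + {b + y : y a positive infinitesimal hyperreal} = {w : ℝ* | w − (a + b) is infinitesimal} (the precise version of the paper's mixed rule "⁻a + b⁺ = ⁻(a+b)⁺"). -/
open Hyperreal

/-- The left monad of a real number `a`. -/
def leftMonad (a : ℝ) : Set ℝ* :=
  {y | ∃ x : ℝ*, Infinitesimal x ∧ 0 < x ∧ y = (a : ℝ*) - x}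

/-- The right monad of a real number `a`. -/
def rightMonad (a : ℝ) : Set ℝ* :=
  {y | ∃ x : ℝ*, Infinitesimal x ∧ 0 < x ∧ y = (a : ℝ*) + x}

/-- Minkowski sum of two sets of hyperreals. -/
def minkSum (S T : Set ℝ*) : Set ℝ* :=
  {w | ∃ s ∈ S, ∃ t ∈ T, w = s + t}

section LinearOrderedAddCommGroup

variable {G : Type*} [AddCommGroup G] [LinearOrder G] [IsOrderedAddMonoid G] {e z : G}

/- If `δ ∈ H` exceeds `|z|`, then `z = (δ + z) - δ` is a difference of positive elements of `H`;
take `δ = e + |z|`. -/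
theorem mem_iff_exists_pos_eq_sub {H : AddSubgroup G} (heH : e ∈ H) (he : 0 < e) :
    z ∈ H ↔ ∃ x ∈ H, 0 < x ∧ ∃ y ∈ H, 0 < y ∧ z = y - x := by
  constructor
  · intro hz
    have hδH : e + |z| ∈ H := H.add_mem heH (abs_mem_iff.2 hz)
    have hδ : |z| < e + |z| := lt_add_of_pos_left _ he
    have hδz : 0 < e + |z| + z := neg_lt_iff_pos_add.1 ((neg_le_abs z).trans_lt hδ)
    exact ⟨e + |z|, hδH, (abs_nonneg z).trans_lt hδ, e + |z| + z, H.add_mem hδH hz, hδz,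
      (add_sub_cancel_left _ _).symm⟩
  · rintro ⟨x, hx, -, y, hy, -, rfl⟩
    exact H.sub_mem hy hx

theorem lt_archimedeanClassMk_iff_exists_pos_eq_sub {c : ArchimedeanClass G}
    (hce : c < .mk e) (he : 0 < e) :
    c < .mk z ↔ ∃ x, c < .mk x ∧ 0 < x ∧ ∃ y, c < .mk y ∧ 0 < y ∧ z = y - x := by
  simp only [← ArchimedeanClass.mem_ballAddSubgroup_iff hce.ne_top] at hce ⊢
  exact mem_iff_exists_pos_eq_sub hce he

end LinearOrderedAddCommGroup

/- Archimedean classes are ordered by decreasing size, so `0 < mk x` says `x` is infinitesimal. -/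
theorem mem_minkSum_leftMonad_rightMonad {a b : ℝ} {w : ℝ*} :
    w ∈ minkSum (leftMonad a) (rightMonad b) ↔
      ∃ x, 0 < ArchimedeanClass.mk x ∧ 0 < x ∧ ∃ y, 0 < ArchimedeanClass.mk y ∧ 0 < y ∧
        w - ((a + b : ℝ) : ℝ*) = y - x := by
  have regroup (x y : ℝ*) :
      w - ((a + b : ℝ) : ℝ*) = y - x ↔ w = (a : ℝ*) - x + (b + y) := by
    rw [coe_add, sub_eq_iff_eq_add, show y - x + (a + b) = a - x + (b + y) by ring]
  simp only [regroup, ← infinitesimal_iff]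
  constructor
  · rintro ⟨_, ⟨x, hx, hx0, rfl⟩, _, ⟨y, hy, hy0, rfl⟩, hw⟩
    exact ⟨x, hx, hx0, y, hy, hy0, hw⟩
  · rintro ⟨x, hx, hx0, y, hy, hy0, hw⟩
    exact ⟨a - x, ⟨x, hx, hx0, rfl⟩, b + y, ⟨y, hy, hy0, rfl⟩, hw⟩

/-- The mixed rule `⁻a + b⁺`: the sum of a left monad and a right monad is the
full monad of `a + b`. -/
theorem leftMonad_add_rightMonad (a b : ℝ) :
    minkSum (leftMonad a) (rightMonad b) =
      {w : ℝ* | Infinitesimal (w - ((a + b : ℝ) : ℝ*))} := by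
  ext w
  rw [mem_minkSum_leftMonad_rightMonad, Set.mem_ofPred_eq, infinitesimal_iff]
  exact (lt_archimedeanClassMk_iff_exists_pos_eq_sub
    archimedeanClassMk_epsilon_pos epsilon_pos).symm
end

section
/- For real numbers a > 0 and b > 0, the pointwise product of the right monad of a and the right monad of b equals the right monad of a·b; that is, {(a + x)·(b + y) : x, y positive infinitesimal hyperreals} = {(a·b) + z : z a positive infinitesimal hyperreal} (the paper's claim a⁺ · b⁺ = (a·b)⁺). -/
open Hyperreal

/-- Pointwise product of two sets of hyperreals. -/
def ptwiseProd (S T : Set ℝ*) : Set ℝ* :=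
  {w | ∃ s ∈ S, ∃ t ∈ T, w = s * t}

/-!
A hyperreal `x` has standard part `r` exactly when, as a germ, it tends to `𝓝 r`. Hence the right
monad of `a` consists of the germs exceeding `a` that tend to `𝓝 a`, and continuity of
multiplication gives one inclusion. Conversely, if `w` lies in the right monad of `a * b`, then any
`s` strictly between `a` and `w / b` tends to `𝓝 a` by squeezing, and `w = s * (w / s)` is the
required factorization.
-/

section GermTendsto

open Filter Topology

variable {α β : Type*} {l : Filter α} [TopologicalSpace β]

theorem germ_tendsto_const_nhds (r : β) : (Germ.const r : Germ l β).Tendsto (𝓝 r) :=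
  (tendsto_const_nhds (x := r) (f := l)).germ_tendsto

theorem germ_tendsto_add [Add β] [ContinuousAdd β] {x y : Germ l β} {r s : β}
    (hx : x.Tendsto (𝓝 r)) (hy : y.Tendsto (𝓝 s)) : (x + y).Tendsto (𝓝 (r + s)) := by
  induction x, y using Germ.inductionOn₂ with | _ f g
  exact Tendsto.add hx hy

theorem germ_tendsto_mul [Mul β] [ContinuousMul β] {x y : Germ l β} {r s : β}
    (hx : x.Tendsto (𝓝 r)) (hy : y.Tendsto (𝓝 s)) : (x * y).Tendsto (𝓝 (r * s)) := by
  induction x, y using Germ.inductionOn₂ with | _ f g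
  exact Tendsto.mul hx hy

theorem germ_tendsto_sub [Sub β] [ContinuousSub β] {x y : Germ l β} {r s : β}
    (hx : x.Tendsto (𝓝 r)) (hy : y.Tendsto (𝓝 s)) : (x - y).Tendsto (𝓝 (r - s)) := by
  induction x, y using Germ.inductionOn₂ with | _ f g
  exact Tendsto.sub hx hy

theorem germ_tendsto_div₀ [GroupWithZero β] [ContinuousInv₀ β] [ContinuousMul β]
    {x y : Germ l β} {r s : β} (hx : x.Tendsto (𝓝 r)) (hy : y.Tendsto (𝓝 s)) (hs : s ≠ 0) :
    (x / y).Tendsto (𝓝 (r / s)) := by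
  induction x, y using Germ.inductionOn₂ with | _ f g
  exact Tendsto.div hx hy hs

theorem germ_tendsto_of_le_of_le [Preorder β] [OrderTopology β] {x y z : Germ l β} {r : β}
    (hx : x.Tendsto (𝓝 r)) (hz : z.Tendsto (𝓝 r)) (hxy : x ≤ y) (hyz : y ≤ z) :
    y.Tendsto (𝓝 r) := by
  induction x, y, z using Germ.inductionOn₃ with | _ f g h
  exact tendsto_of_tendsto_of_tendsto_of_le_of_le' hx hz hxy hyz

end GermTendsto

section RightMonad

open Topology

variable {a b : ℝ} {s t w : ℝ*}

theorem mem_rightMonad_iff : w ∈ rightMonad a ↔ w.Tendsto (𝓝 a) ∧ (a : ℝ*) < w := by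
  constructor
  · rintro ⟨x, hx, hx_pos, rfl⟩
    have hax := germ_tendsto_add (germ_tendsto_const_nhds a) (isSt_iff_tendsto.1 hx)
    rw [add_zero] at hax
    exact ⟨hax, lt_add_of_pos_right _ hx_pos⟩
  · rintro ⟨hw, haw⟩
    have hwa := germ_tendsto_sub hw (germ_tendsto_const_nhds a)
    rw [sub_self] at hwa
    exact ⟨w - a, isSt_iff_tendsto.2 hwa, sub_pos.2 haw, (add_sub_cancel _ _).symm⟩

theorem mul_mem_rightMonad (ha : 0 ≤ a) (hb : 0 ≤ b) (hs : s ∈ rightMonad a)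
    (ht : t ∈ rightMonad b) : s * t ∈ rightMonad (a * b) := by
  rw [mem_rightMonad_iff] at hs ht ⊢
  refine ⟨germ_tendsto_mul hs.1 ht.1, ?_⟩
  rw [coe_mul]
  exact mul_lt_mul'' hs.2 ht.2 (coe_nonneg.2 ha) (coe_nonneg.2 hb)

theorem exists_eq_mul_of_mem_rightMonad_mul (ha : 0 < a) (hb : 0 < b)
    (hw : w ∈ rightMonad (a * b)) : ∃ s ∈ rightMonad a, ∃ t ∈ rightMonad b, w = s * t := by
  obtain ⟨hw_lim, hw_lt⟩ := mem_rightMonad_iff.1 hw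
  have hb' : (0 : ℝ*) < b := coe_pos.2 hb
  have ha_lt : (a : ℝ*) < w / b := (lt_div_iff₀ hb').2 (coe_mul a b ▸ hw_lt)
  obtain ⟨s, has, hsw⟩ := exists_between ha_lt
  have hwb_lim : (w / b).Tendsto (𝓝 a) := by
    have hquot := germ_tendsto_div₀ hw_lim (germ_tendsto_const_nhds b) hb.ne'
    rwa [mul_div_cancel_right₀ a hb.ne'] at hquot
  have hs_lim : s.Tendsto (𝓝 a) :=
    germ_tendsto_of_le_of_le (germ_tendsto_const_nhds a) hwb_lim has.le hsw.le
  have hws_lim : (w / s).Tendsto (𝓝 b) := by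
    have hquot := germ_tendsto_div₀ hw_lim hs_lim ha.ne'
    rwa [mul_div_cancel_left₀ b ha.ne'] at hquot
  have hs_pos : 0 < s := (coe_pos.2 ha).trans has
  have hb_lt : (b : ℝ*) < w / s := (lt_div_comm₀ hs_pos hb').1 hsw
  exact ⟨s, mem_rightMonad_iff.2 ⟨hs_lim, has⟩, w / s, mem_rightMonad_iff.2 ⟨hws_lim, hb_lt⟩,
    (mul_div_cancel₀ w hs_pos.ne').symm⟩

end RightMonad

/-- For positive reals, `a⁺ · b⁺ = (a·b)⁺`. -/
theorem rightMonad_mul (a b : ℝ) (ha : 0 < a) (hb : 0 < b) :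
    ptwiseProd (rightMonad a) (rightMonad b) = rightMonad (a * b) := by
  apply Set.Subset.antisymm
  · rintro _ ⟨s, hs, t, ht, rfl⟩
    exact mul_mem_rightMonad ha.le hb.le hs ht
  · exact fun w hw ↦ exists_eq_mul_of_mem_rightMonad_mul ha hb hw
end
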